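/- Let τ be a complex number with Im τ > 0, let q = e^{2πiτ}, let m, n be positive integers, and let y₁, y₂, …, y_n be complex numbers with y₁ + y₂ + ⋯ + y_n = 0. Define F_{m,n}(y₁,…,y_n|τ) as the unique function of τ and the y_j such that ∑_{k=0}^{mn-1} q^{k²/2} e^{2kiz} ∏_{j=1}^{n} θ₃(mz + y_j + kmπτ | m²nτ) = F_{m,n}(y₁,…,y_n|τ) · θ₃(z|τ) for all complex z. Then F_{m,n}(y₁, …, y_n | τ) = ∑_{k=0}^{n-1} q^{−m²k²/2} ∑_{r₁,…,r_n ∈ ℤ, r₁+⋯+r_n = k} q^{m²n(r₁²+⋯+r_n²)/2} e^{−2i(r₁y₁+⋯+r_ny_n)}. -/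

import Mathlib

open scoped BigOperators

/-- The Jacobi theta function θ₃(z|τ) = ∑_{n∈ℤ} q^{n²/2} e^{2niz}, where q = e^{2πiτ}. -/
noncomputable def θ₃ (z τ : ℂ) : ℂ :=
  ∑' k : ℤ, Complex.exp (2 * Real.pi * Complex.I * τ * ((k : ℂ) ^ 2 / 2)) *
    Complex.exp (2 * (k : ℂ) * Complex.I * z)

open Complex

lemma norm_exp_two_mul_int_mul_I_mul_ofReal (k : ℤ) (x : ℝ) :
    ‖exp (2 * (k : ℂ) * I * x)‖ = 1 := by
  rw [show 2 * (k : ℂ) * I * x = ((2 * k * x : ℝ) : ℂ) * I by push_cast; ring]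
  exact norm_exp_ofReal_mul_I _

lemma integral_exp_two_mul_int_mul_I (k : ℤ) :
    ∫ x in (0 : ℝ)..Real.pi, exp (2 * (k : ℂ) * I * x) = if k = 0 then (Real.pi : ℂ) else 0 := by
  split_ifs with hk
  · simp [hk]
  · have h : 2 * (k : ℂ) * I ≠ 0 := by simp [hk]
    rw [integral_exp_mul_complex h,
      show 2 * (k : ℂ) * I * (Real.pi : ℝ) = k * (2 * Real.pi * I) by ring, exp_int_mul_two_pi_mul_I]
    simp

/-- An absolutely convergent trigonometric series is continuous on the real line. -/
lemma continuous_tsum_mul_exp {ι : Type*} {c : ι → ℂ} (hc : Summable fun i ↦ ‖c i‖) (N : ι → ℤ) :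
    Continuous fun x : ℝ ↦ ∑' i, c i * exp (2 * (N i : ℂ) * I * x) := by
  refine continuous_tsum (fun i ↦ by fun_prop) hc fun i x ↦ ?_
  rw [norm_mul, norm_exp_two_mul_int_mul_I_mul_ofReal, mul_one]

/-- Integrating an absolutely convergent trigonometric series over a period extracts its
constant term. -/
lemma integral_tsum_mul_exp {ι : Type*} [Countable ι] {c : ι → ℂ}
    (hc : Summable fun i ↦ ‖c i‖) (N : ι → ℤ) :
    ∫ x in (0 : ℝ)..Real.pi, ∑' i, c i * exp (2 * (N i : ℂ) * I * x) =
      Real.pi * ∑' i, if N i = 0 then c i else 0 := by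
  have hbound (i : ι) (x : ℝ) : ‖c i * exp (2 * (N i : ℂ) * I * x)‖ ≤ ‖c i‖ := by
    rw [norm_mul, norm_exp_two_mul_int_mul_I_mul_ofReal, mul_one]
  have h := intervalIntegral.hasSum_integral_of_dominated_convergence
    (μ := MeasureTheory.volume) (a := 0) (b := Real.pi)
    (F := fun i (x : ℝ) ↦ c i * exp (2 * (N i : ℂ) * I * x))
    (f := fun x ↦ ∑' i, c i * exp (2 * (N i : ℂ) * I * x))
    (fun i _ ↦ ‖c i‖) (fun i ↦ (by fun_prop : Continuous _).aestronglyMeasurable)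
    (fun i ↦ .of_forall fun x _ ↦ hbound i x) (.of_forall fun _ _ ↦ hc)
    intervalIntegrable_const
    (.of_forall fun x _ ↦ (hc.of_norm_bounded (hbound · x)).hasSum)
  rw [← h.tsum_eq, ← tsum_mul_left]
  refine tsum_congr fun i ↦ ?_
  rw [intervalIntegral.integral_const_mul, integral_exp_two_mul_int_mul_I]
  split_ifs <;> ring

/-- A finite product of absolutely convergent series is the absolutely convergent sum of the
products of their terms. -/
lemma summable_norm_prod_and_prod_tsum {R ι : Type*} [NormedCommRing R] [NormOneClass R]
    [CompleteSpace R] :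
    ∀ {n : ℕ} {f : Fin n → ι → R}, (∀ j, Summable fun i ↦ ‖f j i‖) →
      (Summable fun r : Fin n → ι ↦ ‖∏ j, f j (r j)‖) ∧
        ∏ j, ∑' i, f j i = ∑' r : Fin n → ι, ∏ j, f j (r j)
  | 0, f, _ => ⟨(hasSum_fintype _).summable, by simp⟩
  | n + 1, f, hf => by
    obtain ⟨hs, ht⟩ := summable_norm_prod_and_prod_tsum (f := fun j ↦ f j.succ) fun j ↦ hf j.succ
    let e := Fin.consEquiv fun _ : Fin (n + 1) ↦ ι
    have he (p : ι × (Fin n → ι)) :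
        ∏ j, f j (e p j) = f 0 p.1 * ∏ j : Fin n, f j.succ (p.2 j) := by
      simp [e, Fin.consEquiv, Fin.prod_univ_succ]
    constructor
    · rw [← e.summable_iff]
      simpa only [Function.comp_def, he] using (hf 0).mul_norm hs
    · rw [Fin.prod_univ_succ, ht, tsum_mul_tsum_of_summable_norm (hf 0) hs, ← e.tsum_eq]
      simp only [he]

lemma summable_norm_theta_term (z : ℂ) {τ : ℂ} (hτ : 0 < τ.im) :
    Summable fun k : ℤ ↦ ‖exp (2 * Real.pi * I * τ * ((k : ℂ) ^ 2 / 2)) *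
      exp (2 * (k : ℂ) * I * z)‖ := by
  refine (((summable_jacobiTheta₂_term_iff (z / Real.pi) τ).2 hτ).congr fun k ↦ ?_).norm
  have : (Real.pi : ℂ) ≠ 0 := by exact_mod_cast Real.pi_ne_zero
  rw [jacobiTheta₂_term, ← exp_add]
  congr 1
  field_simp
  ring

/-- The constant term of `q^{k²/2} e^{2kiz} ∏ⱼ θ₃(mz + wⱼ | T)`. -/
lemma integral_exp_mul_prod_theta {n : ℕ} (C T : ℂ) (hT : 0 < T.im) (m k : ℕ) (w : Fin n → ℂ) :
    (Continuous fun x : ℝ ↦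
        C * exp (2 * (k : ℂ) * I * x) * ∏ j, θ₃ ((m : ℂ) * x + w j) T) ∧
      ∫ x in (0 : ℝ)..Real.pi, C * exp (2 * (k : ℂ) * I * x) * ∏ j, θ₃ ((m : ℂ) * x + w j) T =
      Real.pi * ∑' r : Fin n → ℤ, if (k : ℤ) + m * ∑ j, r j = 0 then
        C * ∏ j, (exp (2 * Real.pi * I * T * ((r j : ℂ) ^ 2 / 2)) *
          exp (2 * (r j : ℂ) * I * w j)) else 0 := by
  have hs := (summable_norm_prod_and_prod_tsum fun j ↦ summable_norm_theta_term (w j) hT).1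
  have hs' : Summable fun r : Fin n → ℤ ↦ ‖C * ∏ j, (exp (2 * Real.pi * I * T *
      ((r j : ℂ) ^ 2 / 2)) * exp (2 * (r j : ℂ) * I * w j))‖ := by
    simpa only [norm_mul] using hs.mul_left ‖C‖
  have key (x : ℝ) : C * exp (2 * (k : ℂ) * I * x) * ∏ j, θ₃ ((m : ℂ) * x + w j) T =
      ∑' r : Fin n → ℤ, (C * ∏ j, (exp (2 * Real.pi * I * T * ((r j : ℂ) ^ 2 / 2)) *
        exp (2 * (r j : ℂ) * I * w j))) *
          exp (2 * (((k : ℤ) + m * ∑ j, r j : ℤ) : ℂ) * I * x) := by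
    simp only [θ₃]
    rw [(summable_norm_prod_and_prod_tsum fun j ↦
      summable_norm_theta_term ((m : ℂ) * x + w j) hT).2, ← tsum_mul_left]
    refine tsum_congr fun r ↦ ?_
    simp only [← exp_add, ← exp_sum]
    rw [mul_assoc C, mul_assoc C, ← exp_add, ← exp_add]
    congr 2
    push_cast
    simp only [Finset.mul_sum, Finset.sum_mul, mul_add, add_mul, Finset.sum_add_distrib]
    rw [Finset.sum_congr rfl fun j _ ↦ (by ring :
      2 * (r j : ℂ) * I * (m * x) = 2 * (m * r j) * I * x)]
    ring
  simp only [key]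
  exact ⟨continuous_tsum_mul_exp hs' _, integral_tsum_mul_exp hs' _⟩

lemma theta_constant_term (τ : ℂ) (hτ : 0 < τ.im) :
    ∫ x in (0 : ℝ)..Real.pi, θ₃ x τ = Real.pi := by
  have h := (integral_exp_mul_prod_theta (n := 1) 1 τ hτ 1 0 0).2
  simp only [Nat.cast_zero, Nat.cast_one, one_mul, mul_zero, zero_mul, exp_zero, zero_add,
    Pi.zero_apply, add_zero, Finset.univ_unique, Finset.prod_singleton, Finset.sum_singleton] at h
  rw [h, tsum_eq_single 0]
  · simp
  · intro r hr
    refine if_neg fun h0 ↦ hr (funext fun j ↦ ?_)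
    rwa [Subsingleton.elim j default]

lemma sum_range_mul_eq_of_not_dvd {M : Type*} [AddCommMonoid M] (m n : ℕ) (hm : 0 < m) (g : ℕ → M)
    (hg : ∀ k, ¬ m ∣ k → g k = 0) :
    ∑ k ∈ Finset.range (m * n), g k = ∑ l ∈ Finset.range n, g (m * l) := by
  symm
  refine Finset.sum_of_injOn (m * ·) (fun a _ b _ h ↦ Nat.eq_of_mul_eq_mul_left hm h) ?_ ?_
    fun _ _ ↦ rfl
  · intro l hl
    simpa [hm] using hl
  · intro k hk hk'
    refine hg k fun ⟨l, hl⟩ ↦ hk' ⟨l, ?_, hl.symm⟩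
    subst hl
    simpa [hm] using hk

theorem F_explicit_formula (τ : ℂ) (hτ : 0 < τ.im) (m n : ℕ) (hm : 0 < m) (hn : 0 < n)
    (y : Fin n → ℂ) (hy : ∑ j, y j = 0) (F : ℂ)
    (hF : ∀ z : ℂ,
      ∑ k ∈ Finset.range (m * n),
        Complex.exp (2 * Real.pi * Complex.I * τ * ((k : ℂ) ^ 2 / 2)) *
          Complex.exp (2 * (k : ℂ) * Complex.I * z) *
          ∏ j, θ₃ ((m : ℂ) * z + y j + (k : ℂ) * m * Real.pi * τ) ((m : ℂ) ^ 2 * n * τ)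
      = F * θ₃ z τ) :
    F = ∑ k ∈ Finset.range n,
        Complex.exp (2 * Real.pi * Complex.I * τ * (-((m : ℂ) ^ 2 * (k : ℂ) ^ 2) / 2)) *
          ∑' r : {r : Fin n → ℤ // ∑ j, r j = (k : ℤ)},
            Complex.exp (2 * Real.pi * Complex.I * τ *
                ((m : ℂ) ^ 2 * (n : ℂ) * (∑ j, ((r.1 j : ℂ)) ^ 2) / 2)) *
              Complex.exp (-2 * Complex.I * ∑ j, (r.1 j : ℂ) * y j) := by
  have hT : 0 < ((m : ℂ) ^ 2 * n * τ).im := by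
    rw [show (m : ℂ) ^ 2 * n * τ = ((m ^ 2 * n : ℝ) : ℂ) * τ by push_cast; ring, im_ofReal_mul]
    positivity
  have hpi : (Real.pi : ℂ) ≠ 0 := by exact_mod_cast Real.pi_ne_zero
  have hterm (k : ℕ) := integral_exp_mul_prod_theta
    (exp (2 * Real.pi * I * τ * ((k : ℂ) ^ 2 / 2))) _ hT m k
    fun j ↦ y j + (k : ℂ) * m * Real.pi * τ
  have hint := congrArg (fun f : ℝ → ℂ ↦ ∫ x in (0 : ℝ)..Real.pi, f x)
    (funext fun x : ℝ ↦ hF x)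
  simp only [add_assoc] at hint
  rw [intervalIntegral.integral_const_mul, theta_constant_term τ hτ,
    intervalIntegral.integral_finsetSum fun k _ ↦ (hterm k).1.intervalIntegrable _ _,
    Finset.sum_congr rfl fun k _ ↦ (hterm k).2, ← Finset.mul_sum, mul_comm F] at hint
  rw [← mul_left_cancel₀ hpi hint, sum_range_mul_eq_of_not_dvd m n hm]
  · refine Finset.sum_congr rfl fun l _ ↦ ?_
    rw [← tsum_mul_left, ← (Equiv.neg (Fin n → ℤ)).tsum_eq]
    refine Eq.trans ?_ (tsum_subtype {r : Fin n → ℤ | ∑ j, r j = (l : ℤ)} fun r ↦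
      exp (2 * Real.pi * I * τ * (-((m : ℂ) ^ 2 * (l : ℂ) ^ 2) / 2)) *
        (exp (2 * Real.pi * I * τ * ((m : ℂ) ^ 2 * (n : ℂ) * (∑ j, (r j : ℂ) ^ 2) / 2)) *
          exp (-2 * I * ∑ j, (r j : ℂ) * y j))).symm
    refine tsum_congr fun r ↦ ?_
    have hiff : ((m * l : ℕ) : ℤ) + m * ∑ j, (Equiv.neg (Fin n → ℤ) r) j = 0 ↔
        r ∈ {r : Fin n → ℤ | ∑ j, r j = (l : ℤ)} := by
      have hm' : (m : ℤ) ≠ 0 := by exact_mod_cast hm.ne'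
      simp only [Equiv.neg_apply, Pi.neg_apply, Finset.sum_neg_distrib, Set.mem_ofPred_eq]
      push_cast
      rw [← mul_add, mul_eq_zero, or_iff_right hm', ← sub_eq_add_neg, sub_eq_zero, eq_comm]
    by_cases hr : r ∈ {r : Fin n → ℤ | ∑ j, r j = (l : ℤ)}
    · rw [if_pos (hiff.2 hr), Set.indicator_of_mem hr]
      have hr' : ∑ j, (r j : ℂ) = l := by exact_mod_cast congrArg (Int.cast (R := ℂ)) hr
      simp only [← exp_add, ← exp_sum, Equiv.neg_apply, Pi.neg_apply]
      congr 1
      push_cast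
      have h1 : ∑ j, (2 * Real.pi * I * ((m : ℂ) ^ 2 * n * τ) * ((-(r j : ℂ)) ^ 2 / 2) +
          2 * (-(r j : ℂ)) * I * (y j + (m * l : ℂ) * m * Real.pi * τ)) =
          Real.pi * I * (m ^ 2 * n * τ) * ∑ j, (r j : ℂ) ^ 2 + -2 * I * ∑ j, (r j : ℂ) * y j
            - 2 * I * (m * l * m * Real.pi * τ) * ∑ j, (r j : ℂ) := by
        simp only [Finset.mul_sum, ← Finset.sum_add_distrib, ← Finset.sum_sub_distrib]
        exact Finset.sum_congr rfl fun j _ ↦ by ring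
      rw [h1, hr']
      ring
    · rw [if_neg (hiff.not.2 hr), Set.indicator_of_notMem hr]
  · intro k hk
    refine (tsum_congr fun r ↦ if_neg fun h ↦ hk ?_).trans tsum_zero
    rw [← Int.natCast_dvd_natCast]
    exact ⟨-∑ j, r j, by linarith⟩
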